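/- arXiv:2511.12748 — 2 statements merged into one kernel-verified Lean document; each statement's English description precedes it below -/
import Mathlib

section
/- There exists a constant C > 0 such that for all real numbers s, t with 0 ≤ s and s ≤ t − 1, one has ∫ₛ^{t−1} (t−τ)^{−3/2} (1+τ)^{−3/2} dτ ≤ C · (1 + (t−s))^{−3/2}. -/
open MeasureTheory

lemma aux_int (a b : ℝ) (ha : 1 ≤ a) (hab : a ≤ b) :
    ∫ x in a..b, x ^ (-(3/2) : ℝ) ≤ 2 := by
  rw [integral_rpow]
  · have h1 : a ^ (-(3/2) + 1 : ℝ) ≤ 1 := Real.rpow_le_one_of_one_le_of_nonpos ha (by norm_num)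
    have h2 : 0 ≤ b ^ (-(3/2) + 1 : ℝ) := Real.rpow_nonneg (by linarith) _
    have h3 : ((-(3/2) + 1 : ℝ)) = -(1/2) := by norm_num
    rw [h3] at *
    linarith
  · right
    refine ⟨by norm_num, ?_⟩
    rw [Set.uIcc_of_le hab]
    intro h
    linarith [h.1]

/-- The time-integral convolution estimate: there is a constant `C > 0`
such that for all `0 ≤ s ≤ t − 1`,
`∫ₛ^{t−1} (t−τ)^{−3/2} (1+τ)^{−3/2} dτ ≤ C (1 + (t−s))^{−3/2}`. -/
theorem stmt_5 :
    ∃ C : ℝ, 0 < C ∧ ∀ s t : ℝ, 0 ≤ s → s ≤ t - 1 →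
      (∫ τ in s..(t - 1), (t - τ) ^ (-(3/2) : ℝ) * (1 + τ) ^ (-(3/2) : ℝ)) ≤
        C * (1 + (t - s)) ^ (-(3/2) : ℝ) := by
  refine ⟨4 * (1/2 : ℝ) ^ (-(3/2) : ℝ), by positivity, ?_⟩
  intro s t hs hst
  have hc1 : ContinuousOn (fun τ : ℝ => (t - τ) ^ (-(3/2) : ℝ)) (Set.uIcc s (t - 1)) := by
    apply ContinuousOn.rpow_const (by fun_prop)
    intro x hx
    rw [Set.uIcc_of_le hst] at hx
    left
    linarith [hx.2]
  have hc2 : ContinuousOn (fun τ : ℝ => (1 + τ) ^ (-(3/2) : ℝ)) (Set.uIcc s (t - 1)) := by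
    apply ContinuousOn.rpow_const (by fun_prop)
    intro x hx
    rw [Set.uIcc_of_le hst] at hx
    left
    linarith [hx.1]
  set K : ℝ := ((1/2) * (1 + (t - s))) ^ (-(3/2) : ℝ) with hK
  have hKn : 0 ≤ K := Real.rpow_nonneg (by linarith) _
  have hmain : (∫ τ in s..(t - 1), (t - τ) ^ (-(3/2) : ℝ) * (1 + τ) ^ (-(3/2) : ℝ)) ≤
      ∫ τ in s..(t - 1), K * ((t - τ) ^ (-(3/2) : ℝ) + (1 + τ) ^ (-(3/2) : ℝ)) := by
    apply intervalIntegral.integral_mono_on hst (hc1.mul hc2).intervalIntegrable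
      ((hc1.add hc2).intervalIntegrable.const_mul K)
    intro x hx
    show (t - x) ^ (-(3/2) : ℝ) * (1 + x) ^ (-(3/2) : ℝ) ≤
      K * ((t - x) ^ (-(3/2) : ℝ) + (1 + x) ^ (-(3/2) : ℝ))
    have ha : 0 ≤ (t - x) ^ (-(3/2) : ℝ) := Real.rpow_nonneg (by linarith [hx.2]) _
    have hb : 0 ≤ (1 + x) ^ (-(3/2) : ℝ) := Real.rpow_nonneg (by linarith [hx.1]) _
    rcases le_total (t - x) (1 + x) with h | h
    · have : (1 + x) ^ (-(3/2) : ℝ) ≤ K :=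
        Real.rpow_le_rpow_of_nonpos (by linarith) (by linarith) (by norm_num)
      nlinarith [mul_le_mul_of_nonneg_left this ha, mul_nonneg hKn hb]
    · have : (t - x) ^ (-(3/2) : ℝ) ≤ K :=
        Real.rpow_le_rpow_of_nonpos (by linarith) (by linarith) (by norm_num)
      nlinarith [mul_le_mul_of_nonneg_right this hb, mul_nonneg hKn ha]
  rw [intervalIntegral.integral_const_mul,
    intervalIntegral.integral_add hc1.intervalIntegrable hc2.intervalIntegrable,
    intervalIntegral.integral_comp_sub_left (fun x : ℝ => x ^ (-(3/2) : ℝ)) t,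
    intervalIntegral.integral_comp_add_left (fun x : ℝ => x ^ (-(3/2) : ℝ)) 1] at hmain
  have h1 := aux_int (t - (t - 1)) (t - s) (by linarith) (by linarith)
  have h2 := aux_int (1 + s) (1 + (t - 1)) (by linarith) (by linarith)
  have hKe : K = (1/2 : ℝ) ^ (-(3/2) : ℝ) * (1 + (t - s)) ^ (-(3/2) : ℝ) :=
    Real.mul_rpow (by norm_num) (by linarith)
  calc _ ≤ _ := hmain
    _ ≤ K * 4 := mul_le_mul_of_nonneg_left (by linarith) hKn
    _ = _ := by rw [hKe]; ring
end

section
/- Let s, t be real numbers with 0 ≤ s ≤ t, let C ≥ 0, and let f : ℝ → ℝ be continuous and nonnegative on [s, t], satisfying f(r)² ≤ C · ∫ᵣᵗ (1+τ)^{−3/2} f(τ) dτ for every r ∈ [s, t]. Then f(r) ≤ 2C · ( (1+r)^{−1/2} − (1+t)^{−1/2} ) for every r ∈ [s, t]. -/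
open MeasureTheory

/-- The Grönwall-type argument used in Lemma 2.3: if a continuous
nonnegative `f` satisfies `f(r)² ≤ C ∫ᵣᵗ (1+τ)^{−3/2} f(τ) dτ` on `[s,t]`, then
`f(r) ≤ 2C ((1+r)^{−1/2} − (1+t)^{−1/2})` on `[s,t]`. -/
theorem stmt_6 (s t : ℝ) (hs : 0 ≤ s) (hst : s ≤ t) (C : ℝ) (hC : 0 ≤ C)
    (f : ℝ → ℝ)
    (hfc : ContinuousOn f (Set.Icc s t))
    (hfnn : ∀ r ∈ Set.Icc s t, 0 ≤ f r)
    (hineq : ∀ r ∈ Set.Icc s t,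
      f r ^ 2 ≤ C * ∫ τ in r..t, (1 + τ) ^ (-(3/2) : ℝ) * f τ) :
    ∀ r ∈ Set.Icc s t,
      f r ≤ 2 * C * ((1 + r) ^ (-(1/2) : ℝ) - (1 + t) ^ (-(1/2) : ℝ)) := by
  intro r hr
  obtain ⟨m, hm, hmax⟩ := isCompact_Icc.exists_isMaxOn (Set.nonempty_Icc.2 hr.2)
    (hfc.mono (Set.Icc_subset_Icc_left hr.1))
  have hmst : m ∈ Set.Icc s t := ⟨hr.1.trans hm.1, hm.2⟩
  have hm0 : 0 ≤ m := hs.trans hmst.1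
  have hfr : f r ≤ f m := hmax ⟨le_refl r, hr.2⟩
  have hwc : ContinuousOn (fun τ : ℝ => (1 + τ) ^ (-(3/2) : ℝ)) (Set.Icc m t) := by
    apply ContinuousOn.rpow_const (by fun_prop)
    intro x hx
    left
    have := hx.1
    linarith
  have hfc' : ContinuousOn f (Set.Icc m t) := hfc.mono (Set.Icc_subset_Icc_left hmst.1)
  have hint : (∫ τ in m..t, (1 + τ) ^ (-(3/2) : ℝ))
      = 2 * ((1 + m) ^ (-(1/2) : ℝ) - (1 + t) ^ (-(1/2) : ℝ)) := by
    have h := intervalIntegral.integral_eq_sub_of_hasDerivAt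
      (a := m) (b := t) (f := fun τ : ℝ => -2 * (1 + τ) ^ (-(1/2) : ℝ))
      (f' := fun τ : ℝ => (1 + τ) ^ (-(3/2) : ℝ)) ?_ ?_
    · rw [h]; ring
    · intro x hx
      rw [Set.uIcc_of_le hm.2] at hx
      have hx0 : (1 + x) ≠ 0 := by have := hx.1; linarith
      have h1 : HasDerivAt (fun τ : ℝ => 1 + τ) 1 x := (hasDerivAt_id x).const_add 1
      have h2 := (h1.rpow_const (p := (-(1/2) : ℝ)) (Or.inl hx0)).const_mul (-2)
      refine h2.congr_deriv ?_
      rw [show (-(1/2) - 1 : ℝ) = -(3/2) by norm_num]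
      ring
    · exact hwc.intervalIntegrable_of_Icc hm.2
  have hle : (∫ τ in m..t, (1 + τ) ^ (-(3/2) : ℝ) * f τ)
      ≤ (∫ τ in m..t, (1 + τ) ^ (-(3/2) : ℝ)) * f m := by
    rw [← intervalIntegral.integral_mul_const]
    apply intervalIntegral.integral_mono_on hm.2
    · exact (hwc.mul hfc').intervalIntegrable_of_Icc hm.2
    · exact (hwc.mul continuousOn_const).intervalIntegrable_of_Icc hm.2
    · intro x hx
      have hx1 := hx.1
      exact mul_le_mul_of_nonneg_left (hmax ⟨hm.1.trans hx.1, hx.2⟩)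
        (Real.rpow_nonneg (by linarith) _)
  rw [hint] at hle
  have hmono : ∀ a b : ℝ, 0 ≤ a → a ≤ b →
      (1 + b) ^ (-(1/2) : ℝ) ≤ (1 + a) ^ (-(1/2) : ℝ) := fun a b ha hab =>
    Real.rpow_le_rpow_of_nonpos (by linarith) (by linarith) (by norm_num)
  have hrm := hmono r m (hs.trans hr.1) hm.1
  have hmt := hmono m t hm0 hm.2
  have hsq := (hineq m hmst).trans (mul_le_mul_of_nonneg_left hle hC)
  have hfm : f m ≤ 2 * C * ((1 + m) ^ (-(1/2) : ℝ) - (1 + t) ^ (-(1/2) : ℝ)) := by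
    rcases (hfnn m hmst).eq_or_lt with h0 | hpos
    · rw [← h0]
      exact mul_nonneg (by linarith) (by linarith)
    · refine le_of_mul_le_mul_right ?_ hpos
      linarith [hsq]
  refine hfr.trans (hfm.trans (mul_le_mul_of_nonneg_left ?_ (by linarith)))
  linarith
end
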